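/- For every k ≥ 1 there exists a congruence multiple Dyck language of dimension at most k+1 that is not a multiple context-free language of fan-out at most k, i.e. cmDYCK_{k+1} ∖ MCFL_k ≠ ∅. -/

import Mathlib

namespace CS

/-! ### Dyck languages -/

/-- The smallest monoid congruence on `(S ⊕ S)*` (opening/closing brackets)
satisfying the cancellation `σ σ̄ ≡ ε`. -/
inductive DyckRel (S : Type) : List (S ⊕ S) → List (S ⊕ S) → Prop
  | cancel (σ : S) : DyckRel S [Sum.inl σ, Sum.inr σ] []
  | refl (w : List (S ⊕ S)) : DyckRel S w w
  | symm {u v} : DyckRel S u v → DyckRel S v u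
  | trans {u v w} : DyckRel S u v → DyckRel S v w → DyckRel S u w
  | append {u v u' v'} : DyckRel S u v → DyckRel S u' v' →
      DyckRel S (u ++ u') (v ++ v')

/-- The Dyck language `D(S) = [ε]_{≡_S}`. -/
def DyckLang (S : Type) : Set (List (S ⊕ S)) := {w | DyckRel S w []}

/-- The smallest monoid congruence on `(S ⊕ S)*` closed under the cancellation rule
of congruence multiple Dyck languages:  whenever `{σ₁, …, σ_ℓ} ∈ P`,
`u₀, …, u_ℓ, v₁, …, v_ℓ ∈ D(S)` and `v₁ ⋯ v_ℓ ≡ ε`, then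
`u₀ σ₁ v₁ σ̄₁ u₁ ⋯ σ_ℓ v_ℓ σ̄_ℓ u_ℓ ≡ u₀ u₁ ⋯ u_ℓ`.
The data of `σ₁, …, σ_ℓ`, `v₁, …, v_ℓ` and `u₁, …, u_ℓ` is given by a list
`ts` of triples `(σᵢ, vᵢ, uᵢ)`. -/
inductive MDyckRel (S : Type) (P : Set (Set S)) : List (S ⊕ S) → List (S ⊕ S) → Prop
  | refl (w : List (S ⊕ S)) : MDyckRel S P w w
  | symm {u v} : MDyckRel S P u v → MDyckRel S P v u
  | trans {u v w} : MDyckRel S P u v → MDyckRel S P v w → MDyckRel S P u w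
  | append {u v u' v'} : MDyckRel S P u v → MDyckRel S P u' v' →
      MDyckRel S P (u ++ u') (v ++ v')
  | cancel (u0 : List (S ⊕ S)) (ts : List (S × List (S ⊕ S) × List (S ⊕ S))) :
      (ts.map Prod.fst).Nodup →
      {σ | σ ∈ ts.map Prod.fst} ∈ P →
      u0 ∈ DyckLang S →
      (∀ t ∈ ts, t.2.1 ∈ DyckLang S ∧ t.2.2 ∈ DyckLang S) →
      MDyckRel S P ((ts.map (fun t => t.2.1)).flatten) [] →
      MDyckRel S P
        (u0 ++ (ts.map (fun t => Sum.inl t.1 :: t.2.1 ++ [Sum.inr t.1] ++ t.2.2)).flatten)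
        (u0 ++ (ts.map (fun t => t.2.2)).flatten)

/-- The congruence multiple Dyck language `mD_c(S, P) = [ε]_{≡_{S,P}}`. -/
def MDyckLang (S : Type) (P : Set (Set S)) : Set (List (S ⊕ S)) := {w | MDyckRel S P w []}

/-- The class of congruence multiple Dyck languages over `S` of dimension at most `k`. -/
def cmDyckClass (k : ℕ) (S : Type) : Set (Set (List (S ⊕ S))) :=
  {L | ∃ Pa : Set (Set S), Setoid.IsPartition Pa ∧ (∀ p ∈ Pa, p.ncard ≤ k) ∧
        L = MDyckLang S Pa}

/-! ### Complete commutative strong bimonoids -/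

/-- A complete commutative strong bimonoid: two commutative monoid structures
`(A, +, 0)` and `(A, ·, 1)` with `0` multiplicatively absorbing, together with an
infinitary sum operation satisfying the axioms of Droste and Vogler. -/
class CCSBimonoid (A : Type) extends AddCommMonoid A, CommMonoid A where
  zero_mul' : ∀ a : A, 0 * a = 0
  mul_zero' : ∀ a : A, a * 0 = 0
  bigSum : {I : Type} → Set I → (I → A) → A
  bigSum_empty : ∀ {I : Type} (f : I → A), bigSum (∅ : Set I) f = 0
  bigSum_singleton : ∀ {I : Type} (j : I) (f : I → A), bigSum {j} f = f j
  bigSum_pair : ∀ {I : Type} (j k : I) (f : I → A), j ≠ k →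
      bigSum {j, k} f = f j + f k
  bigSum_partition : ∀ {I J : Type} [Countable J] (T : J → Set I) (f : I → A),
      (∀ j j', j ≠ j' → T j ∩ T j' = ∅) →
      bigSum (Set.univ : Set J) (fun j => bigSum (T j) f) = bigSum (⋃ j, T j) f

/-! ### Multiple context-free grammars -/

/-- A production `A → [u₁, …, u_s](A₁, …, A_ℓ)` of an MCFG.  Letters of the
components are either terminals (`Sum.inl`) or variables `x_i^j`, encoded
0-based as pairs `(i, j)` (`Sum.inr`).  `wf` states well-sortedness of the
variables and `linear` that every variable occurs at most once in `u₁ ⋯ u_s`. -/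
structure Production (Δ N : Type) (sortN : N → ℕ) where
  lhs : N
  rhs : List N
  comp : List (List (Δ ⊕ ℕ × ℕ))
  comp_len : comp.length = sortN lhs
  wf : ∀ p ∈ comp.flatten.filterMap Sum.getRight?,
        ∃ h : p.1 < rhs.length, p.2 < sortN (rhs.get ⟨p.1, h⟩)
  linear : (comp.flatten.filterMap Sum.getRight?).Nodup

namespace Production

variable {Δ N : Type} {sortN : N → ℕ}

/-- The list of occurrences of variables in the components of a production. -/
def vars (ρ : Production Δ N sortN) : List (ℕ × ℕ) :=
  ρ.comp.flatten.filterMap Sum.getRight?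

/-- A production is non-deleting if every variable `x_i^j` occurs (at least,
hence by linearity exactly, once). -/
def NonDeleting (ρ : Production Δ N sortN) : Prop :=
  ∀ (i : ℕ) (h : i < ρ.rhs.length), ∀ j < sortN (ρ.rhs.get ⟨i, h⟩), (i, j) ∈ ρ.vars

/-- A production is terminal-free if no terminal occurs in its components. -/
def TerminalFree (ρ : Production Δ N sortN) : Prop :=
  ∀ u ∈ ρ.comp, ∀ v ∈ u, ∃ p : ℕ × ℕ, v = Sum.inr p

end Production

/-- Substitution of argument tuples for the variables of a component. -/
def subst {Δ : Type} (args : List (List (List Δ))) (u : List (Δ ⊕ ℕ × ℕ)) : List Δ :=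
  u.flatMap (fun v => match v with
    | Sum.inl d => [d]
    | Sum.inr (i, j) => (args.getD i []).getD j [])

/-- Rose trees; derivations of an MCFG are well-sorted trees over the productions. -/
inductive Tree (P : Type) : Type
  | node : P → List (Tree P) → Tree P

/-- The yield of a derivation tree: evaluate the string functions bottom-up. -/
def Tree.yield {Δ N : Type} {sortN : N → ℕ} :
    Tree (Production Δ N sortN) → List (List Δ)
  | .node ρ ts => ρ.comp.map (subst (ts.attach.map (fun t => Tree.yield t.1)))
decreasing_by simp_wf; have := List.sizeOf_lt_of_mem t.2; omega

/-- Relabelling of derivation trees. -/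
def Tree.map {P Q : Type} (f : P → Q) : Tree P → Tree Q
  | .node ρ ts => .node (f ρ) (ts.attach.map (fun t => Tree.map f t.1))
decreasing_by simp_wf; have := List.sizeOf_lt_of_mem t.2; omega

/-- Well-sorted derivation trees over a set of productions, from a given
non-terminal. -/
inductive WFDeriv {Δ N : Type} {sortN : N → ℕ} (P : Set (Production Δ N sortN)) :
    N → Tree (Production Δ N sortN) → Prop
  | node (ρ : Production Δ N sortN) (ts : List (Tree (Production Δ N sortN))) :
      ρ ∈ P → ts.length = ρ.rhs.length →
      (∀ (i : ℕ) (h1 : i < ts.length) (h2 : i < ρ.rhs.length),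
        WFDeriv P (ρ.rhs.get ⟨i, h2⟩) (ts.get ⟨i, h1⟩)) →
      WFDeriv P ρ.lhs (Tree.node ρ ts)

/-- A multiple context-free grammar over the terminal alphabet `Δ`. -/
structure MCFG (Δ : Type) where
  N : Type
  sortN : N → ℕ
  S : N
  sort_S : sortN S = 1
  P : Set (Production Δ N sortN)

namespace MCFG

variable {Δ : Type}

/-- The set `D_G` of derivations of `G` (from the initial non-terminal). -/
def Derivs (G : MCFG Δ) : Set (Tree (Production Δ G.N G.sortN)) :=
  {d | WFDeriv G.P G.S d}

/-- The language of an MCFG. -/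
def lang (G : MCFG Δ) : Set (List Δ) :=
  {w | ∃ d ∈ G.Derivs, d.yield = [w]}

/-- `G` has fan-out at most `k`. -/
def FanoutLE (G : MCFG Δ) (k : ℕ) : Prop := ∀ ρ ∈ G.P, ρ.comp.length ≤ k

/-- `G` is non-deleting. -/
def NonDeleting (G : MCFG Δ) : Prop := ∀ ρ ∈ G.P, ρ.NonDeleting

end MCFG

/-- The class of multiple context-free languages over `Δ` of fan-out at most `k`. -/
def MCFL (k : ℕ) (Δ : Type) : Set (Set (List Δ)) :=
  {L | ∃ G : MCFG Δ, Finite G.N ∧ G.P.Finite ∧ G.FanoutLE k ∧ G.lang = L}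

/-! ### Weighted MCFGs -/

/-- The weight of a derivation tree: multiply the weights of the productions at
all positions. -/
def Tree.weight {P A : Type} [CCSBimonoid A] (μ : P → A) : Tree P → A
  | .node ρ ts => μ ρ * (ts.attach.map (fun t => Tree.weight μ t.1)).prod
decreasing_by simp_wf; have := List.sizeOf_lt_of_mem t.2; omega

/-- An `A`-weighted MCFG. -/
structure WMCFG (A Δ : Type) [CCSBimonoid A] extends MCFG Δ where
  μ : Production Δ N sortN → A
  μ_ne : ∀ ρ ∈ P, μ ρ ≠ 0

/-- The weighted language induced by an `A`-weighted MCFG: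
`⟦G⟧(w) = Σ_{d derivation of w} μ̂(d)`. -/
noncomputable def WMCFG.sem {A Δ : Type} [CCSBimonoid A] (G : WMCFG A Δ) :
    List Δ → A :=
  fun w => CCSBimonoid.bigSum
    {d | WFDeriv G.P G.S d ∧ d.yield = [w]} (fun d => d.weight G.μ)

/-- The class of `A`-weighted multiple context-free languages over `Δ`
of fan-out at most `k`. -/
def WMCFL (k : ℕ) (A Δ : Type) [CCSBimonoid A] : Set (List Δ → A) :=
  {L | ∃ G : WMCFG A Δ, Finite G.N ∧ G.P.Finite ∧ G.toMCFG.FanoutLE k ∧ G.sem = L}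

/-! ### Weighted homomorphisms -/

/-- A weighted language is a monomial if its support has at most one element. -/
def IsMonomial {Γ A : Type} [CCSBimonoid A] (m : List Γ → A) : Prop :=
  ∀ u v, m u ≠ 0 → m v ≠ 0 → u = v

/-- `g` induces an `A`-weighted homomorphism. -/
def WeightedHom {Δ Γ A : Type} [CCSBimonoid A] (g : Δ → List Γ → A) : Prop :=
  ∀ δ, IsMonomial (g δ)

/-- `g` induces an `A`-weighted alphabetic homomorphism: all supports consist of
words of length at most 1. -/
def AlphabeticWeightedHom {Δ Γ A : Type} [CCSBimonoid A] (g : Δ → List Γ → A) : Prop :=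
  WeightedHom g ∧ ∀ δ u, g δ u ≠ 0 → u.length ≤ 1

/-- The `A`-weighted homomorphism `ĝ` induced by `g`:
`ĝ(δ₁⋯δ_k)(u) = Σ_{u = u₁⋯u_k} g(δ₁)(u₁)·…·g(δ_k)(u_k)`. -/
noncomputable def whom {Δ Γ A : Type} [CCSBimonoid A] (g : Δ → List Γ → A)
    (w : List Δ) : List Γ → A :=
  fun u => CCSBimonoid.bigSum
    {ds : List (List Γ) | ds.length = w.length ∧ ds.flatten = u}
    (fun ds => ((w.zip ds).map (fun p => g p.1 p.2)).prod)

/-- The image of a language under an `A`-weighted homomorphism: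
`ĝ(L)(u) = Σ_{w ∈ L} ĝ(w)(u)`. -/
noncomputable def whomImage {Δ Γ A : Type} [CCSBimonoid A] (g : Δ → List Γ → A)
    (L : Set (List Δ)) : List Γ → A :=
  fun u => CCSBimonoid.bigSum L (fun w => whom g w u)

/-! ### Regular languages -/

/-- A language is regular if it is recognised by a finite automaton. -/
def IsRegular {α : Type} (L : Set (List α)) : Prop :=
  ∃ (Q : Type) (_ : Fintype Q) (M : DFA α Q), ∀ w, w ∈ M.accepts ↔ w ∈ L

end CS
namespace CS

/-! ### The unweighted MCFG for a weighted MCFG (weight separation) -/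

/-- Relabel the terminals of a component into the marked alphabet. -/
def markify (M : Type) {Δ : Type} (u : List (Δ ⊕ ℕ × ℕ)) :
    List ((Δ ⊕ M) ⊕ ℕ × ℕ) :=
  u.map (Sum.map Sum.inl id)

lemma markify_filterMap (M : Type) {Δ : Type} (u : List (Δ ⊕ ℕ × ℕ)) :
    (markify M u).filterMap Sum.getRight? = u.filterMap Sum.getRight? := by
  induction u with
  | nil => rfl
  | cons a l ih =>
    cases a
    · exact ih
    · exact congrArg (List.cons _) ih

lemma filterMap_flatten {α β : Type} (f : α → Option β) (l : List (List α)) :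
    l.flatten.filterMap f = (l.map (List.filterMap f)).flatten := by
  induction l <;> simp [*]

lemma ofFn_comp_get {α β : Type} (l : List α) (h : α → β) :
    List.ofFn (fun i : Fin l.length => h (l.get i)) = l.map h := by
  conv_rhs => rw [← List.ofFn_get l]
  rw [List.map_ofFn]
  rfl

lemma mark_flatten_vars {Δ M : Type} (l : List (List (Δ ⊕ ℕ × ℕ)))
    (mk : Fin l.length → Δ ⊕ M) :
    (List.ofFn (fun i =>
        (Sum.inl (mk i) : (Δ ⊕ M) ⊕ ℕ × ℕ) :: markify M (l.get i))).flatten.filterMap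
      Sum.getRight? = l.flatten.filterMap Sum.getRight? := by
  rw [filterMap_flatten, List.map_ofFn, filterMap_flatten]
  congr 1
  have : (List.filterMap Sum.getRight? ∘ fun i =>
      (Sum.inl (mk i) : (Δ ⊕ M) ⊕ ℕ × ℕ) :: markify M (l.get i))
      = fun i : Fin l.length => (l.get i).filterMap Sum.getRight? := by
    funext i
    simp [List.filterMap_cons, Sum.getRight?, markify_filterMap]
  rw [this, ofFn_comp_get]

/-- The production of the unweighted MCFG `G_𝔹` corresponding to a production
`ρ = A → [u₁, …, u_s](A₁, …, A_m)`: each component `uᵢ` is prefixed with the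
fresh terminal symbol `ρ^i` (encoded as `Sum.inr (ρ, i)`, 0-based). -/
def boolifyProd {Δ N : Type} {sortN : N → ℕ} (ρ : Production Δ N sortN) :
    Production (Δ ⊕ Production Δ N sortN × ℕ) N sortN where
  lhs := ρ.lhs
  rhs := ρ.rhs
  comp := List.ofFn (fun i : Fin ρ.comp.length =>
    Sum.inl (Sum.inr (ρ, (i : ℕ))) ::
      markify (Production Δ N sortN × ℕ) (ρ.comp.get i))
  comp_len := by rw [List.length_ofFn]; exact ρ.comp_len
  wf := by
    intro p hp
    rw [mark_flatten_vars] at hp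
    exact ρ.wf p hp
  linear := by
    rw [mark_flatten_vars]
    exact ρ.linear

/-- The unweighted MCFG `G_𝔹` for a weighted MCFG `G`. -/
def boolifyGrammar {A Δ : Type} [CCSBimonoid A] (G : WMCFG A Δ) :
    MCFG (Δ ⊕ Production Δ G.N G.sortN × ℕ) where
  N := G.N
  sortN := G.sortN
  S := G.S
  sort_S := G.sort_S
  P := boolifyProd '' G.P

/-- The weight homomorphism `wts_G` for a weighted MCFG `G`:
`wts_G(δ) = 1.δ`, `wts_G(ρ^1) = μ(ρ).ε` and `wts_G(ρ^i) = 1.ε` for `i ≥ 2`. -/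
noncomputable def wtsHom {A Δ : Type} [CCSBimonoid A] (G : WMCFG A Δ) :
    (Δ ⊕ Production Δ G.N G.sortN × ℕ) → List Δ → A := by
  classical
  exact fun γ w => match γ with
    | Sum.inl d => if w = [d] then 1 else 0
    | Sum.inr (ρ, i) => if w = [] then (if i = 0 then G.μ ρ else 1) else 0

/-! ### The multiple Dyck grammar -/

/-- The sorted alphabet `Σ` induced by an `ℕ₊`-sorted set `(Δ, sd)`:
the opening parentheses `δ^[i]` (0-based: `i < sd δ`). -/
abbrev MSig (Δ : Type) (sd : Δ → ℕ) : Type := {p : Δ × ℕ // p.2 < sd p.1}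

/-- The terminal alphabet `Δ̂` of the multiple Dyck grammar: opening and closing
parentheses. -/
abbrev MAlph (Δ : Type) (sd : Δ → ℕ) : Type := MSig Δ sd ⊕ MSig Δ sd

/-- The partition `𝔓 = {𝔭_δ ∣ δ ∈ Δ}` with `𝔭_δ = {δ^[i] ∣ i ∈ [sd δ]}`. -/
def mdgPart (Δ : Type) (sd : Δ → ℕ) : Set (Set (MSig Δ sd)) :=
  {s | ∃ δ : Δ, s = {p : MSig Δ sd | p.1.1 = δ}}

/-- Sorts of the non-terminals `A₁, …, A_k` (0-based: `A_{i+1}` has sort `i+1`). -/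
def dyckSort (k : ℕ) : Fin k → ℕ := fun i => (i : ℕ) + 1

/-- Productions of type (i): `A_s → f(A_{s₁}, …, A_{s_ℓ})` for every linear
non-deleting terminal-free string function `f` with `ℓ ≤ r`. -/
def TypeI (Δ : Type) (sd : Δ → ℕ) (k r : ℕ)
    (ρ : Production (MAlph Δ sd) (Fin k) (dyckSort k)) : Prop :=
  ρ.rhs.length ≤ r ∧ ρ.NonDeleting ∧ ρ.TerminalFree

/-- Productions of type (ii):
`A_s → [δ^[1] x₁^1 δ̄^[1], …, δ^[s] x₁^s δ̄^[s]](A_s)` for `δ` of sort `s`. -/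
def TypeII (Δ : Type) (sd : Δ → ℕ) (k : ℕ)
    (ρ : Production (MAlph Δ sd) (Fin k) (dyckSort k)) : Prop :=
  ∃ δ : Δ, dyckSort k ρ.lhs = sd δ ∧ ρ.rhs = [ρ.lhs] ∧
    ρ.comp = List.ofFn (fun j : Fin (sd δ) =>
      [Sum.inl (Sum.inl ⟨(δ, (j : ℕ)), j.isLt⟩),
       Sum.inr ((0 : ℕ), (j : ℕ)),
       Sum.inl (Sum.inr ⟨(δ, (j : ℕ)), j.isLt⟩)])

/-- Productions of type (iii): `A_s → [u₁, …, u_s](A_s)` where each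
`u_j ∈ {x_j, x_j δ^[1] δ̄^[1], δ^[1] δ̄^[1] x_j}` for `δ` of sort 1. -/
def TypeIII (Δ : Type) (sd : Δ → ℕ) (k : ℕ)
    (ρ : Production (MAlph Δ sd) (Fin k) (dyckSort k)) : Prop :=
  ρ.rhs = [ρ.lhs] ∧
  ∀ (j : ℕ) (h : j < ρ.comp.length),
    ρ.comp.get ⟨j, h⟩ = [Sum.inr ((0 : ℕ), j)] ∨
    ∃ (δ : Δ) (h1 : 0 < sd δ), sd δ = 1 ∧
      (ρ.comp.get ⟨j, h⟩ =
        [Sum.inr ((0 : ℕ), j),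
         Sum.inl (Sum.inl ⟨(δ, 0), h1⟩), Sum.inl (Sum.inr ⟨(δ, 0), h1⟩)] ∨
       ρ.comp.get ⟨j, h⟩ =
        [Sum.inl (Sum.inl ⟨(δ, 0), h1⟩), Sum.inl (Sum.inr ⟨(δ, 0), h1⟩),
         Sum.inr ((0 : ℕ), j)])

/-- The productions of the multiple Dyck grammar `G_Δ`. -/
def mdgProds (Δ : Type) (sd : Δ → ℕ) (k r : ℕ) :
    Set (Production (MAlph Δ sd) (Fin k) (dyckSort k)) :=
  {ρ | TypeI Δ sd k r ρ ∨ TypeII Δ sd k ρ ∨ TypeIII Δ sd k ρ}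

/-- The multiple Dyck grammar `G_Δ` with respect to the sorted set `(Δ, sd)`. -/
def mdgGrammar (Δ : Type) (sd : Δ → ℕ) (k r : ℕ) (hk : 0 < k) :
    MCFG (MAlph Δ sd) where
  N := Fin k
  sortN := dyckSort k
  S := ⟨0, hk⟩
  sort_S := rfl
  P := mdgProds Δ sd k r

end CS
namespace CS
section Aux

abbrev cntC {X : Type} [DecidableEq X] (a : X) (w : List X) : ℕ :=
  @List.count X instBEqOfDecidableEq a w

lemma cntC_zero {X : Type} [DecidableEq X] {a : X} {w : List X} (h : a ∉ w) :
    cntC a w = 0 := List.count_eq_zero.2 h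

lemma cntC_le {X : Type} [DecidableEq X] (a : X) (w : List X) :
    cntC a w ≤ w.length := List.count_le_length

lemma cntC_append {X : Type} [DecidableEq X] (a : X) (v w : List X) :
    cntC a (v ++ w) = cntC a v + cntC a w := List.count_append

def fillC {Δ : Type} (y : List (List Δ)) (u : List (Δ ⊕ ℕ)) : List Δ :=
  u.flatMap (Sum.elim (fun d => [d]) (fun j => y.getD j []))

def varsC {Δ X : Type} (u : List (Δ ⊕ X)) : List X := u.filterMap Sum.getRight?

def szC {Δ : Type} (y : List (List Δ)) (u : List (Δ ⊕ ℕ)) : ℕ :=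
  ((varsC u).map (fun j => (y.getD j []).length)).sum

def selC (i : ℕ) (p : ℕ × ℕ) : Option ℕ := if p.1 = i then some p.2 else none

def inC {Δ : Type} (args : List (List (List Δ))) (i : ℕ) (c : List (Δ ⊕ ℕ × ℕ)) :
    List (Δ ⊕ ℕ) :=
  c.flatMap (Sum.elim (fun d => [Sum.inl d])
    (fun p => if p.1 = i then [Sum.inr p.2]
      else ((args.getD p.1 []).getD p.2 []).map Sum.inl))

def childC {Δ : Type} (comp : List (List (Δ ⊕ ℕ × ℕ))) (args : List (List (List Δ))) (i : ℕ)
    (u : List (Δ ⊕ ℕ)) : List (Δ ⊕ ℕ) :=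
  u.flatMap (Sum.elim (fun d => [Sum.inl d]) (fun j => inC args i (comp.getD j [])))

lemma fillC_append {Δ : Type} (y : List (List Δ)) (u v : List (Δ ⊕ ℕ)) :
    fillC y (u ++ v) = fillC y u ++ fillC y v := by simp [fillC]

lemma fillC_map_inl {Δ : Type} (y : List (List Δ)) (w : List Δ) :
    fillC y (w.map Sum.inl) = w := by
  induction w with
  | nil => rfl
  | cons a w ih => simpa [fillC] using ih

lemma fill_inC {Δ : Type} (args : List (List (List Δ))) (i : ℕ) (hi : i < args.length)
    (z : List (List Δ)) (c : List (Δ ⊕ ℕ × ℕ)) :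
    fillC z (inC args i c) = subst (args.set i z) c := by
  induction c with
  | nil => rfl
  | cons a c ih =>
    have e1 : inC args i (a :: c) = inC args i [a] ++ inC args i c := by simp [inC]
    have e2 : subst (args.set i z) (a :: c)
        = subst (args.set i z) [a] ++ subst (args.set i z) c := by simp [subst]
    rw [e1, e2, fillC_append, ih]
    congr 1
    rcases a with d | ⟨p, q⟩
    · simp [inC, fillC, subst]
    · by_cases h : p = i
      · subst h
        simp [inC, fillC, subst, hi]
      · have : i ≠ p := fun h' => h h'.symm
        simp only [inC, List.flatMap_cons, Sum.elim_inr, h, if_false, List.flatMap_nil,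
          List.append_nil, fillC_map_inl, subst]
        simp [List.getD_eq_getElem?_getD, List.getElem?_set, this]

lemma getD_map_subst {Δ : Type} (comp : List (List (Δ ⊕ ℕ × ℕ))) (args : List (List (List Δ)))
    (j : ℕ) : (comp.map (subst args)).getD j [] = subst args (comp.getD j []) := by
  have : ([] : List Δ) = subst args [] := rfl
  conv_lhs => rw [this]
  rw [List.getD_map]

lemma fill_childC {Δ : Type} (comp : List (List (Δ ⊕ ℕ × ℕ))) (args : List (List (List Δ)))
    (i : ℕ) (hi : i < args.length) (z : List (List Δ)) (u : List (Δ ⊕ ℕ)) :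
    fillC z (childC comp args i u) = fillC (comp.map (subst (args.set i z))) u := by
  induction u with
  | nil => rfl
  | cons a u ih =>
    have e1 : childC comp args i (a :: u) = childC comp args i [a] ++ childC comp args i u := by
      simp [childC]
    have e2 : ∀ y : List (List Δ), fillC y (a :: u) = fillC y [a] ++ fillC y u := by
      intro y; simp [fillC]
    rw [e1, e2, fillC_append, ih]
    congr 1
    rcases a with d | j
    · simp [childC, fillC]
    · have : childC comp args i [Sum.inr j] = inC args i (comp.getD j []) := by simp [childC]
      rw [this, fill_inC _ _ hi, ← getD_map_subst]
      simp [fillC]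

lemma varsC_map_inl {Δ X : Type} (w : List Δ) :
    varsC (w.map Sum.inl : List (Δ ⊕ X)) = [] := by
  induction w with
  | nil => rfl
  | cons a w ih => simpa [varsC] using ih

lemma varsC_append {Δ X : Type} (u v : List (Δ ⊕ X)) :
    varsC (u ++ v) = varsC u ++ varsC v := by simp [varsC]

lemma vars_inC {Δ : Type} (args : List (List (List Δ))) (i : ℕ) (c : List (Δ ⊕ ℕ × ℕ)) :
    varsC (inC args i c) = (varsC c).filterMap (selC i) := by
  induction c with
  | nil => rfl
  | cons a c ih =>
    have e1 : inC args i (a :: c) = inC args i [a] ++ inC args i c := by simp [inC]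
    have e2 : varsC (a :: c) = varsC [a] ++ varsC c := varsC_append [a] c
    rw [e1, e2, varsC_append, ih, List.filterMap_append]
    congr 1
    rcases a with d | ⟨p, q⟩
    · simp [inC, varsC, List.filterMap_cons]
    · by_cases h : p = i
      · simp [inC, varsC, selC, h]
      · simp only [inC, List.flatMap_cons, Sum.elim_inr, h, if_false, List.flatMap_nil,
          List.append_nil, varsC_map_inl]
        simp [varsC, selC, h]

lemma vars_childC {Δ : Type} (comp : List (List (Δ ⊕ ℕ × ℕ))) (args : List (List (List Δ)))
    (i : ℕ) (u : List (Δ ⊕ ℕ)) :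
    varsC (childC comp args i u)
      = (varsC u).flatMap (fun j => (varsC (comp.getD j [])).filterMap (selC i)) := by
  induction u with
  | nil => rfl
  | cons a u ih =>
    have e1 : childC comp args i (a :: u) = childC comp args i [a] ++ childC comp args i u := by
      simp [childC]
    have e2 : varsC (a :: u) = varsC [a] ++ varsC u := varsC_append [a] u
    rw [e1, e2, varsC_append, ih, List.flatMap_append]
    congr 1
    rcases a with d | j
    · simp [childC, varsC, List.filterMap_cons]
    · have : childC comp args i [Sum.inr j] = inC args i (comp.getD j []) := by simp [childC]
      rw [this, vars_inC]
      simp [varsC]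

lemma subst_len {Δ : Type} (args : List (List (List Δ))) (c : List (Δ ⊕ ℕ × ℕ)) :
    (subst args c).length ≤ c.length + ∑ i ∈ Finset.range args.length,
      (((varsC c).filterMap (selC i)).map
        (fun j => ((args.getD i []).getD j []).length)).sum := by
  induction c with
  | nil => simp [subst]
  | cons a c ih =>
    have e1 : subst args (a :: c) = subst args [a] ++ subst args c := by simp [subst]
    have e2 : varsC (a :: c) = varsC [a] ++ varsC c := varsC_append [a] c
    rw [e1, e2]
    simp only [List.filterMap_append, List.map_append, List.sum_append, Finset.sum_add_distrib,
      List.length_append, List.length_cons]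
    suffices h : (subst args [a]).length ≤ 1 + ∑ i ∈ Finset.range args.length,
      (((varsC [a]).filterMap (selC i)).map
        (fun j => ((args.getD i []).getD j []).length)).sum by omega
    rcases a with d | ⟨p, q⟩
    · simp [subst]
    · by_cases hp : p < args.length
      · refine le_trans ?_ (Nat.le_add_left _ _)
        refine le_trans ?_ (Finset.single_le_sum (f := fun i => (((varsC [(Sum.inr (p, q) :
          Δ ⊕ ℕ × ℕ)]).filterMap (selC i)).map
          (fun j => ((args.getD i []).getD j []).length)).sum)
          (fun _ _ => Nat.zero_le _) (Finset.mem_range.2 hp))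
        simp [subst, varsC, selC]
      · have : args.getD p [] = [] := List.getD_eq_default _ _ (by omega)
        have : (subst args [Sum.inr (p, q)]) = [] := by
          simp only [subst, List.flatMap_cons, this]; simp
        rw [this]; simp

lemma sz_parent {Δ : Type} (comp : List (List (Δ ⊕ ℕ × ℕ))) (args : List (List (List Δ)))
    (T : ℕ) (hT : ∀ c ∈ comp, c.length ≤ T) (u : List (Δ ⊕ ℕ)) :
    szC (comp.map (subst args)) u ≤ (varsC u).length * T +
      ∑ i ∈ Finset.range args.length, szC (args.getD i []) (childC comp args i u) := by
  simp only [szC, vars_childC, getD_map_subst]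
  generalize varsC u = V
  induction V with
  | nil => simp
  | cons j V ih =>
    simp only [List.map_cons, List.sum_cons, List.flatMap_cons, List.map_append, List.sum_append,
      Finset.sum_add_distrib, List.length_cons, Nat.add_mul, Nat.one_mul]
    have h1 := subst_len args (comp.getD j [])
    have h2 : (comp.getD j []).length ≤ T := by
      by_cases hj : j < comp.length
      · rw [List.getD_eq_getElem _ _ hj]; exact hT _ (List.getElem_mem hj)
      · rw [List.getD_eq_default _ _ (by omega)]; simp
    omega

lemma yield_node {Δ N : Type} {sortN : N → ℕ} (ρ : Production Δ N sortN)
    (ts : List (Tree (Production Δ N sortN))) :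
    (Tree.node ρ ts).yield = ρ.comp.map (subst (ts.map Tree.yield)) := by
  rw [Tree.yield, List.attach_map_val (f := Tree.yield)]

lemma child_nodup {Δ N : Type} {sortN : N → ℕ} (ρ : Production Δ N sortN)
    (args : List (List (List Δ))) (i : ℕ) (u : List (Δ ⊕ ℕ)) (hu : (varsC u).Nodup)
    (hb : ∀ j ∈ varsC u, j < ρ.comp.length) :
    (varsC (childC ρ.comp args i u)).Nodup := by
  rw [vars_childC]
  have hl := ρ.linear
  rw [filterMap_flatten, List.nodup_flatten] at hl
  obtain ⟨h1, h2⟩ := hl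
  have sel_inj : ∀ a a' b, b ∈ selC i a → b ∈ selC i a' → a = a' := by
    rintro ⟨a1, a2⟩ ⟨b1, b2⟩ c h h'
    simp only [selC, Option.mem_def] at h h'
    split_ifs at h h' with e1 e2
    simp_all
  rw [List.nodup_flatMap]
  constructor
  · intro j hj
    refine List.Nodup.filterMap sel_inj ?_
    apply h1
    rw [List.getD_eq_getElem _ _ (hb j hj)]
    exact List.mem_map_of_mem (List.getElem_mem _)
  · refine List.Pairwise.imp_of_mem ?_ hu
    intro a b ha hb' hab
    have ha := hb a ha
    have hb' := hb b hb'
    have key : ∀ a b (ha : a < ρ.comp.length) (hb : b < ρ.comp.length), a < b →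
        List.Disjoint (varsC (ρ.comp.getD a [])) (varsC (ρ.comp.getD b [])) := by
      intro a b ha hb hab
      have := List.pairwise_iff_getElem.1 h2 a b (by simpa using ha) (by simpa using hb) hab
      rw [List.getD_eq_getElem _ _ ha, List.getD_eq_getElem _ _ hb]
      simpa [varsC] using this
    have hd : List.Disjoint (varsC (ρ.comp.getD a [])) (varsC (ρ.comp.getD b [])) := by
      rcases lt_or_gt_of_ne hab with h | h
      · exact key a b ha hb' h
      · exact (key b a hb' ha h).symm
    intro x hx hx'
    simp only [List.mem_filterMap] at hx hx'
    obtain ⟨p, hp, hpx⟩ := hx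
    obtain ⟨q, hq, hqx⟩ := hx'
    have := sel_inj p q x hpx hqx
    subst this
    exact hd hp hq

lemma len_yield {Δ : Type} (G : MCFG Δ) {A : G.N} {t} (h : WFDeriv G.P A t) (k : ℕ)
    (hk : G.FanoutLE k) : t.yield.length = G.sortN A ∧ G.sortN A ≤ k := by
  cases h with
  | node ρ ts h1 h2 h3 =>
    rw [yield_node, List.length_map, ρ.comp_len]
    exact ⟨rfl, ρ.comp_len ▸ hk ρ h1⟩

lemma nodup_len (l : List ℕ) (k : ℕ) (h : l.Nodup) (hb : ∀ j ∈ l, j < k) : l.length ≤ k := by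
  rw [← List.toFinset_card_of_nodup h]
  calc l.toFinset.card ≤ (Finset.range k).card := Finset.card_le_card (by
        intro x hx; simpa using hb x (by simpa using hx))
    _ = k := by simp

lemma descend {Δ : Type} (G : MCFG Δ) (k T r g n : ℕ) (hk : G.FanoutLE k)
    (hr : ∀ ρ ∈ G.P, ρ.rhs.length ≤ r) (hT : ∀ ρ ∈ G.P, ∀ c ∈ ρ.comp, c.length ≤ T)
    (hn : k * T + r * g < n) (A : G.N) (t) (ht : WFDeriv G.P A t) :
    ∀ u : List (Δ ⊕ ℕ), (∀ t', WFDeriv G.P A t' → fillC t'.yield u ∈ G.lang) →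
      (varsC u).Nodup → (∀ j ∈ varsC u, j < G.sortN A) → n ≤ szC t.yield u →
      ∃ B t2 u2, WFDeriv G.P B t2 ∧ (∀ t', WFDeriv G.P B t' → fillC t'.yield u2 ∈ G.lang) ∧
        (varsC u2).Nodup ∧ (∀ j ∈ varsC u2, j < k) ∧ fillC t2.yield u2 = fillC t.yield u ∧
        g ≤ szC t2.yield u2 ∧ szC t2.yield u2 < n := by
  induction ht with
  | node ρ ts hρ hlen hts ih =>
    intro u hctx hnd hb hsz
    rw [yield_node] at hsz
    have hvl : (varsC u).length ≤ k :=
      nodup_len _ _ hnd (fun j hj => lt_of_lt_of_le (hb j hj) (ρ.comp_len ▸ hk ρ hρ))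
    have hp := sz_parent ρ.comp (ts.map Tree.yield) T (hT ρ hρ) u
    have hex : ∃ i, i < ts.length ∧
        g ≤ szC ((ts.map Tree.yield).getD i []) (childC ρ.comp (ts.map Tree.yield) i u) := by
      by_contra hcon
      push Not at hcon
      have h1 : ∑ i ∈ Finset.range (ts.map Tree.yield).length,
          szC ((ts.map Tree.yield).getD i []) (childC ρ.comp (ts.map Tree.yield) i u)
          ≤ ∑ i ∈ Finset.range (ts.map Tree.yield).length, g :=
        Finset.sum_le_sum (fun i hi => (hcon i (by simpa using hi)).le)
      simp only [Finset.sum_const, Finset.card_range, List.length_map, smul_eq_mul] at h1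
      have h2 : ts.length * g ≤ r * g := Nat.mul_le_mul_right _ (hlen ▸ hr ρ hρ)
      have h3 : (varsC u).length * T ≤ k * T := Nat.mul_le_mul_right _ hvl
      simp only [List.length_map] at hp
      omega
    obtain ⟨i, hi, hg⟩ := hex
    have hi2 : i < ρ.rhs.length := hlen ▸ hi
    have hyi : (ts.map Tree.yield).getD i [] = (ts.get ⟨i, hi⟩).yield := by
      rw [List.getD_eq_getElem _ _ (by simpa using hi)]; simp
    rw [hyi] at hg
    have hset : (ts.map Tree.yield).set i (ts.get ⟨i, hi⟩).yield = ts.map Tree.yield := by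
      simp [← List.map_set]
    have hfill : fillC (ts.get ⟨i, hi⟩).yield (childC ρ.comp (ts.map Tree.yield) i u)
        = fillC (Tree.node ρ ts).yield u := by
      rw [fill_childC _ _ _ (by simpa using hi), hset, yield_node]
    have hctx' : ∀ t', WFDeriv G.P (ρ.rhs.get ⟨i, hi2⟩) t' →
        fillC t'.yield (childC ρ.comp (ts.map Tree.yield) i u) ∈ G.lang := by
      intro t' ht'
      rw [fill_childC _ _ _ (by simpa using hi), ← List.map_set, ← yield_node]
      apply hctx
      refine WFDeriv.node ρ _ hρ (by simpa using hlen) ?_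
      intro i' h1 h2
      by_cases he : i = i'
      · subst he
        simpa using ht'
      · have := hts i' (by simpa using h1) h2
        simpa [List.getElem_set, he] using this
    have hnd' := child_nodup ρ (ts.map Tree.yield) i u hnd
      (fun j hj => by rw [ρ.comp_len]; exact hb j hj)
    have hb' : ∀ j ∈ varsC (childC ρ.comp (ts.map Tree.yield) i u),
        j < G.sortN (ρ.rhs.get ⟨i, hi2⟩) := by
      intro j hj
      rw [vars_childC, List.mem_flatMap] at hj
      obtain ⟨j0, hj0, hj⟩ := hj
      rw [List.mem_filterMap] at hj
      obtain ⟨⟨p, q⟩, hpq, hs⟩ := hj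
      have hj0' : j0 < ρ.comp.length := by rw [ρ.comp_len]; exact hb j0 hj0
      rw [List.getD_eq_getElem _ _ hj0'] at hpq
      simp only [selC] at hs
      split_ifs at hs with e
      simp only [Option.some.injEq] at hs
      subst e; subst hs
      obtain ⟨h, h'⟩ := ρ.wf (p, q) (by
        rw [filterMap_flatten, List.mem_flatten]
        exact ⟨_, List.mem_map_of_mem (List.getElem_mem hj0'), hpq⟩)
      exact h'
    by_cases hlt : szC (ts.get ⟨i, hi⟩).yield (childC ρ.comp (ts.map Tree.yield) i u) < n
    · refine ⟨_, ts.get ⟨i, hi⟩, _, hts i hi hi2, hctx', hnd', ?_, hfill, hg, hlt⟩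
      intro j hj
      exact lt_of_lt_of_le (hb' j hj) (len_yield G (hts i hi hi2) k hk).2
    · obtain ⟨B, t2, u2, a1, a2, a3, a4, a5, a6⟩ :=
        ih i hi hi2 _ hctx' hnd' hb' (not_lt.1 hlt)
      exact ⟨B, t2, u2, a1, a2, a3, a4, a5.trans hfill, a6⟩

/-! Length and letter counts of filled contexts. -/

lemma fill_length {Δ : Type} (y : List (List Δ)) (u : List (Δ ⊕ ℕ)) :
    (fillC y u).length = (u.filterMap Sum.getLeft?).length + szC y u := by
  induction u with
  | nil => rfl
  | cons a u ih =>
    rcases a with d | j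
    · simp [fillC, szC, varsC, List.filterMap_cons] at ih ⊢; omega
    · simp [fillC, szC, varsC, List.filterMap_cons] at ih ⊢; omega

lemma fill_count {Δ : Type} [DecidableEq Δ] (y : List (List Δ)) (u : List (Δ ⊕ ℕ)) (b : Δ)
    (hb : ∀ j ∈ varsC u, b ∉ y.getD j []) :
    cntC b (fillC y u) = cntC b (u.filterMap Sum.getLeft?) := by
  induction u with
  | nil => rfl
  | cons a u ih =>
    rcases a with d | j
    · have := ih (fun j hj => hb j (by simpa [varsC] using hj))
      simp only [fillC, List.flatMap_cons, Sum.elim_inl, cntC, List.count_append] at this ⊢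
      rw [this]
      simp [List.count_cons, add_comm]
    · have := ih (fun j hj => hb j (by
        simp only [varsC, List.filterMap_cons, Sum.getRight?_inr, List.mem_cons]
        exact Or.inr hj))
      have h0 : (y.getD j []).count b = 0 := List.count_eq_zero.2 (hb j (by simp [varsC]))
      simp only [fillC, List.flatMap_cons, Sum.elim_inr, cntC, List.count_append] at this ⊢
      rw [this, h0]
      simp [List.filterMap_cons]

lemma infix_fill {Δ : Type} (y : List (List Δ)) (u : List (Δ ⊕ ℕ)) (j : ℕ)
    (hj : j ∈ varsC u) : y.getD j [] <:+: fillC y u := by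
  simp only [varsC, List.mem_filterMap] at hj
  obtain ⟨a, ha, h⟩ := hj
  rcases a with d | j'
  · simp at h
  · simp at h
    subst h
    obtain ⟨s, t, rfl⟩ := List.append_of_mem ha
    exact ⟨fillC y s, fillC y t, by simp [fillC]⟩

/-! The language. -/

lemma mdyck_inv {S : Type} [Fintype S] (φ : S ⊕ S → ℤ) (hφ : ∑ a, φ a = 0)
    {u v : List (S ⊕ S)} (h : MDyckRel S {Set.univ} u v) :
    (u.map φ).sum = (v.map φ).sum := by
  classical
  induction h with
  | refl w => rfl
  | symm _ ih => exact ih.symm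
  | trans _ _ ih1 ih2 => exact ih1.trans ih2
  | append _ _ ih1 ih2 => simp [ih1, ih2]
  | cancel u0 ts hnd hP _ _ _ ih =>
    have h1 : ((ts.map Prod.fst).map (fun s => φ (Sum.inl s) + φ (Sum.inr s))).sum = 0 := by
      rw [← List.sum_toFinset _ hnd]
      have : (ts.map Prod.fst).toFinset = Finset.univ := by
        ext x
        have hx : x ∈ {σ | σ ∈ ts.map Prod.fst} := by
          rw [Set.mem_singleton_iff.1 hP]; trivial
        simpa using hx
      rw [this, Finset.sum_add_distrib, ← Fintype.sum_sum_type, hφ]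
    have h2 : ∀ ts : List (S × List (S ⊕ S) × List (S ⊕ S)),
        (((ts.map (fun t => Sum.inl t.1 :: t.2.1 ++ [Sum.inr t.1] ++ t.2.2)).flatten).map φ).sum
        = ((ts.map Prod.fst).map (fun s => φ (Sum.inl s) + φ (Sum.inr s))).sum
          + (((ts.map (fun t => t.2.1)).flatten).map φ).sum
          + (((ts.map (fun t => t.2.2)).flatten).map φ).sum := by
      intro ts
      induction ts with
      | nil => simp
      | cons t ts ih =>
        rw [List.map_cons, List.flatten_cons, List.map_append, List.sum_append, ih]
        simp only [List.map_cons, List.flatten_cons, List.map_append, List.sum_append,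
          List.sum_cons, List.cons_append, List.map_nil, List.sum_nil]
        ring
    rw [List.map_append, List.sum_append, h2, h1, ih, List.map_append, List.sum_append]
    simp

lemma mdyck_count {S : Type} [Fintype S] [DecidableEq S] {w : List (S ⊕ S)}
    (h : w ∈ MDyckLang S {Set.univ}) (a b : S ⊕ S) : cntC a w = cntC b w := by
  have key : ∀ (w : List (S ⊕ S)) , (w.map (fun x => (if x = a then (1 : ℤ) else 0)
      - if x = b then 1 else 0)).sum = (cntC a w : ℤ) - cntC b w := by
    intro w
    induction w with
    | nil => simp
    | cons x w ih =>
      simp only [List.map_cons, List.sum_cons, ih, cntC, List.count_cons, beq_iff_eq]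
      push_cast
      ring
  have := mdyck_inv (fun x => (if x = a then (1 : ℤ) else 0) - if x = b then 1 else 0)
    (by simp) h
  rw [key, key] at this
  simp at this
  omega

lemma len_of_counts {X : Type} [Fintype X] [DecidableEq X] (w : List X) (c : ℕ)
    (h : ∀ a, cntC a w = c) : w.length = Fintype.card X * c := by
  have : ∑ a, cntC a w = w.length := by
    have := Multiset.sum_count_eq_card (s := Finset.univ) (m := (w : Multiset X)) (by simp)
    simpa using this
  rw [← this]
  simp [h]

def blk {m : ℕ} (n : ℕ) (i : Fin m) : List (Fin m ⊕ Fin m) :=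
  List.replicate n (Sum.inl i) ++ List.replicate n (Sum.inr i)

def wrd (m n : ℕ) : List (Fin m ⊕ Fin m) := ((List.finRange m).map (blk n)).flatten

lemma blk_succ {m : ℕ} (n : ℕ) (i : Fin m) :
    blk (n + 1) i = Sum.inl i :: blk n i ++ [Sum.inr i] := by
  simp only [blk]
  rw [List.replicate_succ, List.replicate_succ' (a := Sum.inr i)]
  simp

lemma blk_dyck {m : ℕ} (n : ℕ) (i : Fin m) : blk n i ∈ DyckLang (Fin m) := by
  induction n with
  | zero => exact DyckRel.refl _
  | succ n ih =>
    rw [blk_succ]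
    have h := DyckRel.append (DyckRel.append (DyckRel.refl [Sum.inl i]) ih)
      (DyckRel.refl [Sum.inr i])
    exact DyckRel.trans h (DyckRel.cancel i)

lemma wrd_mem (m n : ℕ) : wrd m n ∈ MDyckLang (Fin m) {Set.univ} := by
  induction n with
  | zero =>
    have : wrd m 0 = [] := by simp [wrd, blk]
    rw [this]; exact MDyckRel.refl _
  | succ n ih =>
    have := MDyckRel.cancel (S := Fin m) (P := {Set.univ}) []
      ((List.finRange m).map (fun i => (i, blk n i, []))) ?_ ?_ (DyckRel.refl _) ?_ ?_
    · simp only [List.map_map, List.nil_append] at this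
      have e1 : (wrd m (n+1)) = (List.map ((fun t : Fin m × List (Fin m ⊕ Fin m) × List (Fin m ⊕ Fin m) => Sum.inl t.1 :: t.2.1 ++ [Sum.inr t.1] ++ t.2.2)
        ∘ fun i => (i, blk n i, [])) (List.finRange m)).flatten := by
        unfold wrd
        congr 2
        funext i
        simp [blk_succ]
      have e2 : (List.map ((fun t : Fin m × List (Fin m ⊕ Fin m) × List (Fin m ⊕ Fin m) => t.2.2) ∘ fun i => (i, blk n i, []))
        (List.finRange m)).flatten = [] := by simp
      rw [← e1, e2] at this
      exact this
    · simp [Function.comp_def, List.nodup_finRange]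
    · simp [Function.comp_def]
    · intro t ht
      simp only [List.mem_map] at ht
      obtain ⟨i, _, rfl⟩ := ht
      exact ⟨blk_dyck n i, DyckRel.refl _⟩
    · rw [List.map_map]; exact ih

def rk {m : ℕ} : Fin m ⊕ Fin m → ℕ := Sum.elim (fun i => 2 * i.val) (fun i => 2 * i.val + 1)

lemma rk_inj {m : ℕ} : Function.Injective (rk (m := m)) := by
  rintro (a | a) (b | b) h <;> simp only [rk, Sum.elim_inl, Sum.elim_inr] at h
  · congr 1; ext; omega
  · omega
  · omega
  · congr 1; ext; omega

lemma wrd_sorted (m n : ℕ) : (wrd m n).Pairwise (fun a b => rk a ≤ rk b) := by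
  rw [wrd, List.pairwise_flatten]
  constructor
  · intro l hl
    simp only [List.mem_map] at hl
    obtain ⟨i, _, rfl⟩ := hl
    rw [blk, List.pairwise_append]
    refine ⟨?_, ?_, ?_⟩
    · rw [List.pairwise_replicate]; simp
    · rw [List.pairwise_replicate]; simp
    · intro a ha b hb
      rw [List.eq_of_mem_replicate ha, List.eq_of_mem_replicate hb]
      simp [rk]
  · rw [List.pairwise_map]
    refine List.Pairwise.imp ?_ (List.pairwise_lt_finRange m)
    intro a b hab x hx y hy
    have hab : a.val < b.val := hab
    simp only [blk, List.mem_append, List.mem_replicate] at hx hy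
    rcases hx with ⟨_, rfl⟩ | ⟨_, rfl⟩ <;> rcases hy with ⟨_, rfl⟩ | ⟨_, rfl⟩ <;>
      simp only [rk, Sum.elim_inl, Sum.elim_inr] <;> omega

lemma wrd_count (m n : ℕ) (a : Fin m ⊕ Fin m) : cntC a (wrd m n) = n := by
  have hl : (wrd m n).length = 2 * m * n := by
    simp [wrd, blk, Function.comp_def]; ring
  have h := len_of_counts (wrd m n) (cntC a (wrd m n)) (fun b => mdyck_count (wrd_mem m n) b a)
  rw [hl] at h
  have hm : 0 < m := by rcases a with a | a <;> exact a.pos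
  simp only [Fintype.card_sum, Fintype.card_fin] at h
  have : 2 * m * n = 2 * m * cntC a (wrd m n) := by rw [h]; ring
  exact (Nat.eq_of_mul_eq_mul_left (by omega) this).symm

lemma infix_card (m n : ℕ) (y : List (Fin m ⊕ Fin m)) (hy : y <:+: wrd m n)
    (hl : y.length < n) : y.toFinset.card ≤ 2 := by
  by_contra hc
  obtain ⟨a, b, c, ha, hb, hc, hab, hac, hbc⟩ := Finset.two_lt_card_iff.1 (not_le.1 hc)
  simp only [List.mem_toFinset] at ha hb hc
  have key : ∀ p q r : Fin m ⊕ Fin m, p ∈ y → r ∈ y → rk p < rk q → rk q < rk r → False := by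
    intro p q r hp hr hpq hqr
    obtain ⟨l1, l2, h⟩ := hy
    have hs := wrd_sorted m n
    have hcount := wrd_count m n q
    rw [← h] at hs hcount
    rw [List.pairwise_append, List.pairwise_append] at hs
    obtain ⟨⟨_, _, h1⟩, _, h2⟩ := hs
    have e1 : cntC q l1 = 0 := cntC_zero (fun hq => by
      have := h1 q hq p hp; omega)
    have e2 : cntC q l2 = 0 := cntC_zero (fun hq => by
      have := h2 r (by simp [hr]) q hq; omega)
    have e3 : cntC q y ≤ y.length := cntC_le _ _
    rw [cntC_append, cntC_append] at hcount
    omega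
  have h1 : rk a ≠ rk b := fun h => hab (rk_inj h)
  have h2 : rk a ≠ rk c := fun h => hac (rk_inj h)
  have h3 : rk b ≠ rk c := fun h => hbc (rk_inj h)
  rcases lt_or_gt_of_ne h1 with h1 | h1 <;> rcases lt_or_gt_of_ne h2 with h2 | h2 <;>
    rcases lt_or_gt_of_ne h3 with h3 | h3
  · exact key a b c ha hc h1 h3
  · exact key a c b ha hb h2 h3
  · omega
  · exact key c a b hc hb h2 h1
  · exact key b a c hb hc h1 h2
  · omega
  · exact key b c a hb ha h3 h2
  · exact key c b a hc ha h3 h1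

lemma sz_perm {Δ : Type} (y : List (List Δ)) (u v : List (Δ ⊕ ℕ)) (hu : (varsC u).Nodup)
    (hv : (varsC v).Nodup) (h : (varsC u).toFinset = (varsC v).toFinset) :
    szC y u = szC y v := by
  unfold szC
  rw [← List.sum_toFinset _ hu, ← List.sum_toFinset _ hv, h]

lemma untouched (k n : ℕ) (y : List (List (Fin (k + 1) ⊕ Fin (k + 1))))
    (u : List ((Fin (k + 1) ⊕ Fin (k + 1)) ⊕ ℕ)) (hnd : (varsC u).Nodup)
    (hb : ∀ j ∈ varsC u, j < k) (hf : fillC y u = wrd (k + 1) n) (hs : szC y u < n) :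
    ∃ b, ∀ j ∈ varsC u, b ∉ y.getD j [] := by
  have hcard : ((varsC u).toFinset.biUnion (fun j => (y.getD j []).toFinset)).card ≤ k * 2 := by
    refine le_trans (Finset.card_biUnion_le_card_mul _ _ 2 ?_) ?_
    · intro j hj
      have hj' : j ∈ varsC u := by simpa using hj
      refine infix_card (k + 1) n _ (hf ▸ infix_fill y u j hj') (lt_of_le_of_lt ?_ hs)
      exact List.single_le_sum (fun _ _ => Nat.zero_le _) _
        (List.mem_map_of_mem (f := fun j => (y.getD j []).length) hj')
    · rw [List.toFinset_card_of_nodup hnd]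
      exact Nat.mul_le_mul_right _ (nodup_len _ _ hnd hb)
  by_contra hcon
  push Not at hcon
  have : (varsC u).toFinset.biUnion (fun j => (y.getD j []).toFinset) = Finset.univ := by
    ext b
    obtain ⟨j, hj, hbj⟩ := hcon b
    simp only [Finset.mem_biUnion, List.mem_toFinset, Finset.mem_univ, iff_true]
    exact ⟨j, hj, hbj⟩
  rw [this] at hcard
  simp at hcard
  omega

theorem main_aux (k : ℕ) (G : MCFG (Fin (k + 1) ⊕ Fin (k + 1))) (hN : Finite G.N)
    (hP : G.P.Finite) (hk : G.FanoutLE k)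
    (hL : G.lang = MDyckLang (Fin (k + 1)) {Set.univ}) : False := by
  classical
  obtain ⟨r, hr⟩ : ∃ r, ∀ ρ ∈ G.P, ρ.rhs.length ≤ r := by
    obtain ⟨r, hr⟩ := (hP.image (fun ρ => ρ.rhs.length)).bddAbove
    exact ⟨r, fun ρ h => hr ⟨ρ, h, rfl⟩⟩
  obtain ⟨T, hT⟩ : ∃ T, ∀ ρ ∈ G.P, ∀ c ∈ ρ.comp, c.length ≤ T := by
    obtain ⟨T, hT⟩ := (hP.image (fun ρ => (ρ.comp.map List.length).sum)).bddAbove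
    refine ⟨T, fun ρ h c hc => le_trans ?_ (hT ⟨ρ, h, rfl⟩)⟩
    exact List.single_le_sum (fun _ _ => Nat.zero_le _) _ (List.mem_map_of_mem hc)
  have step : ∀ g : ℕ, ∃ (n : ℕ) (B : G.N) (t : _) (u : List ((Fin (k + 1) ⊕ Fin (k + 1)) ⊕ ℕ))
      (b : Fin (k + 1) ⊕ Fin (k + 1)) (J : Set.Iic (Finset.range k)),
      WFDeriv G.P B t ∧ (∀ t', WFDeriv G.P B t' → fillC t'.yield u ∈ G.lang) ∧
        (varsC u).Nodup ∧ (varsC u).toFinset = J ∧ fillC t.yield u = wrd (k + 1) n ∧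
        g ≤ szC t.yield u ∧ (∀ j ∈ varsC u, b ∉ t.yield.getD j []) := by
    intro g
    set n := k * T + r * g + 1 with hn
    have hw : wrd (k + 1) n ∈ G.lang := hL ▸ wrd_mem _ _
    obtain ⟨t, ht, hty⟩ := hw
    have hlen : n ≤ (wrd (k + 1) n).length := by
      have h := wrd_count (k + 1) n (Sum.inl 0)
      have h' : cntC (Sum.inl 0) (wrd (k + 1) n) ≤ (wrd (k + 1) n).length :=
        cntC_le _ _
      omega
    obtain ⟨B, t2, u2, h1, h2, h3, h4, h5, h6, h7⟩ :=
      descend G k T r g n hk hr hT (by omega) G.S t ht [Sum.inr 0]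
        (by
          intro t' ht'
          refine ⟨t', ht', ?_⟩
          have hl := (len_yield G ht' k hk).1
          rw [G.sort_S] at hl
          obtain ⟨x, hx⟩ := List.length_eq_one_iff.1 hl
          simp [hx, fillC])
        (by simp [varsC]) (by simp [varsC, G.sort_S])
        (by simpa [szC, varsC, hty] using hlen)
    have h5' : fillC t2.yield u2 = wrd (k + 1) n := by
      rw [h5]; simp [fillC, hty]
    obtain ⟨b, hb⟩ := untouched k n _ _ h3 h4 h5' h7
    exact ⟨n, B, t2, u2, b, ⟨(varsC u2).toFinset, by
      intro x hx; simpa using h4 x (by simpa using hx)⟩, h1, h2, h3, rfl, h5', h6, hb⟩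
  choose n B t u b J h1 h2 h3 h4 h5 h6 h7 using step
  have : Finite (Set.Iic (Finset.range k)) := (Set.finite_Iic _).to_subtype
  obtain ⟨c, hc⟩ := Finite.exists_infinite_fiber (fun g => (B g, b g, J g))
  have hinf : ((fun g => (B g, b g, J g)) ⁻¹' {c}).Infinite := Set.infinite_coe_iff.1 hc
  obtain ⟨g, hg⟩ := hinf.nonempty
  obtain ⟨g', hg', hlt⟩ := hinf.exists_gt (szC (t g).yield (u g))
  have he : (B g, b g, J g) = (B g', b g', J g') := Eq.trans hg (Eq.symm hg')
  simp only [Prod.mk.injEq] at he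
  obtain ⟨eB, eb, eJ⟩ := he
  have hv : (varsC (u g)).toFinset = (varsC (u g')).toFinset := by rw [h4, h4, eJ]
  have hmem := h2 g (t g') (eB ▸ h1 g')
  rw [hL] at hmem
  have c1 := fill_count (t g).yield (u g) (b g) (h7 g)
  have c2 := fill_count (t g').yield (u g) (b g) (by
    intro j hj
    rw [eb]
    apply h7 g'
    have : j ∈ (varsC (u g')).toFinset := hv ▸ (by simpa using hj)
    simpa using this)
  have l1 := fill_length (t g).yield (u g)
  have l2 := fill_length (t g').yield (u g)
  rw [sz_perm _ _ _ (h3 g) (h3 g') hv] at l2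
  have m1 := len_of_counts _ _ (fun a => mdyck_count hmem a (b g))
  have hmem' := h2 g (t g) (h1 g)
  rw [hL] at hmem'
  have m2 := len_of_counts _ _ (fun a => mdyck_count hmem' a (b g))
  rw [c2, ← c1, ← m2] at m1
  have := h6 g'
  omega

end Aux
end CS

/-- For every `k ≥ 1` there is a congruence multiple Dyck
language of dimension at most `k + 1` that is not a multiple context-free
language of fan-out at most `k`: `cmDYCK_{k+1} ∖ MCFL_k ≠ ∅`. -/
theorem CS.cmDyck_succ_not_MCFL (k : ℕ) (hk : 1 ≤ k) :
    ∃ (S : Type) (_ : Fintype S) (Pa : Set (Set S)),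
      Setoid.IsPartition Pa ∧ (∀ p ∈ Pa, p.ncard ≤ k + 1) ∧
      CS.MDyckLang S Pa ∉ CS.MCFL k (S ⊕ S) := by
  refine ⟨Fin (k + 1), inferInstance, {Set.univ}, ?_, ?_, ?_⟩
  · refine ⟨by simpa using (Set.univ_nonempty (α := Fin (k + 1))).ne_empty.symm, ?_⟩
    intro a
    exact ⟨Set.univ, by simp, by simp⟩
  · intro p hp
    rw [Set.mem_singleton_iff.1 hp]
    simp [Set.ncard_univ]
  · rintro ⟨G, hN, hP, hF, hL⟩
    exact CS.main_aux k G hN hP hF hL
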